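/- arXiv:1606.00563 — 3 statements merged into one kernel-verified Lean document; each statement's English description precedes it below -/
import Mathlib

section
/- Let w ∈ (E∪T∪O)^+. Then w ~ w₁ w₂ w₃ for some words w₁, w₃ ∈ O* and w₂ ∈ (E∪T)*, where moreover w₁ and w₃ each have length at most 1. -/
/-!
The set of words equivalent to some `w₁ w₂ w₃` of the required shape, of no greater length, is
closed under appending a letter on the right. Letters `o` and `t` cause no trouble: `o_j o_k` is
`t_jk o_k` (or just `o_k`, if `j = k`), and `o`'s commute with `t`'s. The one real case is `w₁ w₂ o_i · e_i`.

* If `e_i` does not occur in `w₂`, then `o_i` commutes with `w₂` and is merged into `w₁` through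
  `o_k o_i = o_k t_ki`.
* Otherwise `w₂ = u e_i v` with `e_i` not in `v`, and `e_i v o_i e_i = e_i o_i v e_i`. Next to
  `o_i`, every `t_ij` in `v` may be replaced by `o_j`, giving a word `v'` that commutes with `e_i`
  (`exists_commuting`), whence `e_i o_i v' e_i = e_i o_i e_i v' = e_i v'`. The resulting word
  `w₁ u e_i v'` is shorter by two letters, though it may contain many `o`'s, so an induction on
  length handles it. This is why the length bound is carried along in `exists_form`.

The computations take place in the quotient of the free monoid by the congruence.
-/

namespace RookPaper

/-- Reflexive–symmetric–transitive closure of a relation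
(connectivity by paths in a graph). -/
inductive RClosure {V : Type*} (E : V → V → Prop) : V → V → Prop
  | base {x y : V} : E x y → RClosure E x y
  | refl (x : V) : RClosure E x x
  | symm {x y : V} : RClosure E x y → RClosure E y x
  | trans {x y z : V} : RClosure E x y → RClosure E y z → RClosure E x z

/-- The 2n points `1,…,n` (`Sum.inl`) and `1',…,n'` (`Sum.inr`). -/
abbrev Pt (n : ℕ) := Fin n ⊕ Fin n

/-- A rook partition of degree `n`, encoded as a partial equivalence relation on the
`2n` points: its blocks are the equivalence classes of `rel`, and the rook dots are the
points `x` with `¬ rel x x`. -/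
structure RP (n : ℕ) where
  rel : Pt n → Pt n → Prop
  symm : ∀ {x y : Pt n}, rel x y → rel y x
  trans : ∀ {x y z : Pt n}, rel x y → rel y z → rel x z

/-- The underlying index in `[n]` of a point (`i` and `i'` both have index `i`). -/
def idx {n : ℕ} : Pt n → Fin n := Sum.elim id id

/-- For `A ⊆ [n]`, the corresponding set of upper points. -/
def upSet {n : ℕ} (A : Set (Fin n)) : Set (Pt n) := Sum.inl '' A

/-- For `B ⊆ [n]`, the set `B' = {b' : b ∈ B}` of lower points. -/
def dnSet {n : ℕ} (B : Set (Fin n)) : Set (Pt n) := Sum.inr '' B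

/-- `x` is a rook dot of `α`. -/
def RP.IsRookDot {n : ℕ} (α : RP n) (x : Pt n) : Prop := ¬ α.rel x x

/-- `α` has no rook dots, i.e. `α` lies in the partition monoid `P_n`. -/
def RP.NoDots {n : ℕ} (α : RP n) : Prop := ∀ x, α.rel x x

/-- `B` is a block of `α`. -/
def RP.IsBlock {n : ℕ} (α : RP n) (B : Set (Pt n)) : Prop :=
  ∃ x, α.rel x x ∧ B = {y | α.rel x y}

/-- The identity rook partition, with blocks `{i,i'}`. -/
instance {n : ℕ} : One (RP n) :=
  ⟨{ rel := fun x y => idx x = idx y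
     symm := fun h => Eq.symm h
     trans := fun h h' => Eq.trans h h' }⟩

/-! The product graph `Γ(α,β)` lives on three rows of `n` vertices. -/

abbrev V3 (n : ℕ) := Fin n ⊕ Pt n

def vTop {n : ℕ} (i : Fin n) : V3 n := Sum.inl i
def vMid {n : ℕ} (i : Fin n) : V3 n := Sum.inr (Sum.inl i)
def vBot {n : ℕ} (i : Fin n) : V3 n := Sum.inr (Sum.inr i)

/-- `α` occupies the top and middle rows. -/
def embA {n : ℕ} : Pt n → V3 n := Sum.elim vTop vMid
/-- `β` occupies the middle and bottom rows. -/
def embB {n : ℕ} : Pt n → V3 n := Sum.elim vMid vBot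
/-- The product `αβ` lives on the top and bottom rows. -/
def embOut {n : ℕ} : Pt n → V3 n := Sum.elim vTop vBot

/-- The edges of the product graph `Γ(α,β)`. -/
def pgEdge {n : ℕ} (α β : RP n) (x y : V3 n) : Prop :=
  (∃ a b : Pt n, α.rel a b ∧ x = embA a ∧ y = embA b) ∨
  (∃ a b : Pt n, β.rel a b ∧ x = embB a ∧ y = embB b)

/-- Connectivity (by a possibly empty path) in the product graph `Γ(α,β)`. -/
def pgConn {n : ℕ} (α β : RP n) : V3 n → V3 n → Prop :=
  RClosure (pgEdge α β)

/-- The white vertices of `Γ(α,β)`: a top vertex is white if it is a rook dot of `α`,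
a bottom vertex is white if it is a rook dot of `β`, and a middle vertex is white if it is
a rook dot of `α` (as a lower point) or of `β` (as an upper point). -/
def pgWhite {n : ℕ} (α β : RP n) (v : V3 n) : Prop :=
  (∃ i, v = vTop i ∧ ¬ α.rel (Sum.inl i) (Sum.inl i)) ∨
  (∃ i, v = vMid i ∧ (¬ α.rel (Sum.inr i) (Sum.inr i) ∨ ¬ β.rel (Sum.inl i) (Sum.inl i))) ∨
  (∃ i, v = vBot i ∧ ¬ β.rel (Sum.inr i) (Sum.inr i))

/-- The product of two rook partitions: a point of `αβ` is a rook dot iff it is connected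
to a white vertex of `Γ(α,β)`, and two points are in the same block of `αβ` iff they are
connected in `Γ(α,β)` (and are not rook dots). -/
instance {n : ℕ} : Mul (RP n) :=
  ⟨fun α β =>
    { rel := fun x y =>
        pgConn α β (embOut x) (embOut y) ∧
          ∀ w, pgWhite α β w → ¬ pgConn α β (embOut x) w
      symm := by
        intro x y h
        exact ⟨RClosure.symm h.1, fun w hw hc => h.2 w hw (RClosure.trans h.1 hc)⟩
      trans := by
        intro x y z h h'
        exact ⟨RClosure.trans h.1 h'.1, h.2⟩ }⟩

/-- The rook partition corresponding to a permutation `σ`: blocks `{i, (σ i)'}`. -/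
def permRP {n : ℕ} (σ : Equiv.Perm (Fin n)) : RP n where
  rel x y := Sum.elim (fun i => σ i) (fun i => i) x = Sum.elim (fun i => σ i) (fun i => i) y
  symm := fun h => Eq.symm h
  trans := fun h h' => Eq.trans h h'

/-- `α` lies in the copy of the symmetric group `S_n` inside `RP_n`. -/
def RP.IsPermDiag {n : ℕ} (α : RP n) : Prop := ∃ σ : Equiv.Perm (Fin n), α = permRP σ

/-- The generator `ē_i` : blocks `{j,j'}` for `j ≠ i`, and singleton blocks `{i}`, `{i'}`. -/
def ebar {n : ℕ} (i : Fin n) : RP n where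
  rel x y := x = y ∨ (idx x = idx y ∧ idx x ≠ i)
  symm := by
    rintro x y (rfl | ⟨h1, h2⟩)
    · exact Or.inl rfl
    · exact Or.inr ⟨h1.symm, h1 ▸ h2⟩
  trans := by
    rintro x y z (rfl | ⟨h1, h2⟩) h
    · exact h
    · rcases h with rfl | ⟨h3, h4⟩
      · exact Or.inr ⟨h1, h2⟩
      · exact Or.inr ⟨h1.trans h3, h2⟩

/-- The generator `t̄_ij` (for `i ≠ j`): blocks `{k,k'}` for `k ∉ {i,j}`, and `{i,j,i',j'}`. -/
def tbar {n : ℕ} (i j : Fin n) : RP n where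
  rel x y := idx x = idx y ∨ ((idx x = i ∨ idx x = j) ∧ (idx y = i ∨ idx y = j))
  symm := by
    rintro x y (h | ⟨h1, h2⟩)
    · exact Or.inl h.symm
    · exact Or.inr ⟨h2, h1⟩
  trans := by
    rintro x y z hxy hyz
    rcases hxy with h | ⟨h1, h2⟩
    · rcases hyz with h' | ⟨h3, h4⟩
      · exact Or.inl (h.trans h')
      · refine Or.inr ⟨?_, h4⟩
        rw [h]; exact h3
    · rcases hyz with h' | ⟨h3, h4⟩
      · refine Or.inr ⟨h1, ?_⟩
        rw [← h']; exact h2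
      · exact Or.inr ⟨h1, h4⟩

/-- `ō_A` for a subset `A ⊆ [n]`: rook dots at all points of `A ∪ A'`, blocks `{j,j'}` for
`j ∉ A`. -/
def obarS {n : ℕ} (A : Set (Fin n)) : RP n where
  rel x y := idx x = idx y ∧ idx x ∉ A
  symm := by
    rintro x y ⟨h1, h2⟩
    exact ⟨h1.symm, h1 ▸ h2⟩
  trans := by
    rintro x y z ⟨h1, h2⟩ ⟨h3, h4⟩
    exact ⟨h1.trans h3, h2⟩

/-- The generator `ō_i`: rook dots `i` and `i'`, blocks `{j,j'}` for `j ≠ i`. -/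
def obar {n : ℕ} (i : Fin n) : RP n := obarS {i}

/-- For an index `i` of a simple transposition (`1 ≤ i ≤ n-1`, zero-based `Fin (n-1)`),
the smaller of the two swapped points. -/
def lo {n : ℕ} (i : Fin (n - 1)) : Fin n := ⟨i.val, by have := i.isLt; omega⟩
/-- The larger of the two swapped points. -/
def hi {n : ℕ} (i : Fin (n - 1)) : Fin n := ⟨i.val + 1, by have := i.isLt; omega⟩

/-- The generator `s̄_i`: the simple transposition with blocks `{i,(i+1)'}`, `{i+1,i'}`,
and `{j,j'}` for other `j`. -/
def sbar {n : ℕ} (i : Fin (n - 1)) : RP n := permRP (Equiv.swap (lo i) (hi i))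

/-- The generator `q̄_i = t̄_{i,i+1}`. -/
def qbar {n : ℕ} (i : Fin (n - 1)) : RP n := tbar (lo i) (hi i)

/-- Membership in the subsemigroup generated by a subset `X`. -/
inductive SgGen {M : Type*} [Mul M] (X : Set M) : M → Prop
  | incl {x : M} : x ∈ X → SgGen X x
  | mul {a b : M} : SgGen X a → SgGen X b → SgGen X (a * b)

/-- Membership in the submonoid generated by a subset `X`. -/
inductive MonGen {M : Type*} [Mul M] [One M] (X : Set M) : M → Prop
  | one : MonGen X 1
  | incl {x : M} : x ∈ X → MonGen X x
  | mul {a b : M} : MonGen X a → MonGen X b → MonGen X (a * b)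

/-- Evaluation of a word under a map on the letters (the product, in order, of the images
of the letters; the empty word evaluates to `1`). -/
def evalWord {X M : Type*} [Mul M] [One M] (f : X → M) : List X → M
  | [] => 1
  | [x] => f x
  | x :: y :: w => f x * evalWord f (y :: w)

/-- The congruence on the free monoid of words (with product = concatenation) generated
by a set of pairs `R`.  Restricted to nonempty words it is the congruence on the free
semigroup generated by `R`. -/
inductive CongGen {X : Type*} (R : List X → List X → Prop) : List X → List X → Prop
  | rel {u v : List X} : R u v → CongGen R u v
  | refl (u : List X) : CongGen R u u
  | symm {u v : List X} : CongGen R u v → CongGen R v u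
  | trans {u v w : List X} : CongGen R u v → CongGen R v w → CongGen R u w
  | mul {u v u' v' : List X} : CongGen R u v → CongGen R u' v' → CongGen R (u ++ u') (v ++ v')


/-! ## The alphabet E ∪ T ∪ O and the relations (R1)–(R17) -/

/-- The alphabet `E ∪ T ∪ O`: letters `e_i` (`i ∈ [n]`), `t_ij` (`1 ≤ i < j ≤ n`,
with the convention `t_ij = t_ji`), and `o_i` (`i ∈ [n]`). -/
inductive ETO (n : ℕ) : Type
  | e : Fin n → ETO n
  | t : (i j : Fin n) → i < j → ETO n
  | o : Fin n → ETO n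

/-- The letter `t_ij = t_ji`, for distinct `i, j`. -/
def tg {n : ℕ} (i j : Fin n) (h : i ≠ j) : ETO n :=
  if hlt : i < j then ETO.t i j hlt else ETO.t j i (h.symm.lt_of_le (not_lt.mp hlt))

/-- The letter `t_ij` when `i ≠ j`, and the empty word when `i = j`. -/
def tgd {n : ℕ} (i j : Fin n) : List (ETO n) :=
  if h : i = j then [] else [tg i j h]

/-- `x` is a letter of `E ∪ T`. -/
def ETO.isET {n : ℕ} : ETO n → Prop
  | .o _ => False
  | _ => True

/-- `x` is a letter of `O`. -/
def ETO.isO {n : ℕ} : ETO n → Prop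
  | .o _ => True
  | _ => False

/-- The relations (R1)–(R17). -/
inductive RelETO (n : ℕ) : List (ETO n) → List (ETO n) → Prop
  | r1 (i : Fin n) : RelETO n [.e i, .e i] [.e i]
  | r2 (i j : Fin n) (h : i ≠ j) : RelETO n [.e i, .e j] [.e j, .e i]
  | r3 (i j : Fin n) (h : i ≠ j) : RelETO n [tg i j h, tg i j h] [tg i j h]
  | r4 (i j k l : Fin n) (hij : i ≠ j) (hkl : k ≠ l) :
      RelETO n [tg i j hij, tg k l hkl] [tg k l hkl, tg i j hij]
  | r5 (i j k : Fin n) (hij : i ≠ j) (hjk : j ≠ k) (hik : i ≠ k) :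
      RelETO n [tg i j hij, tg j k hjk] [tg j k hjk, tg k i hik.symm]
  | r6 (i j k : Fin n) (hij : i ≠ j) (hki : k ≠ i) (hkj : k ≠ j) :
      RelETO n [tg i j hij, .e k] [.e k, tg i j hij]
  | r7 (i j k : Fin n) (hij : i ≠ j) (hk : k = i ∨ k = j) :
      RelETO n [tg i j hij, .e k, tg i j hij] [tg i j hij]
  | r8 (i j k : Fin n) (hij : i ≠ j) (hk : k = i ∨ k = j) :
      RelETO n [.e k, tg i j hij, .e k] [.e k]
  | r9 (i j k : Fin n) (hij : i ≠ j) (hjk : j ≠ k) (hik : i ≠ k) :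
      RelETO n [.e k, tg k i hik.symm, .e i, tg i j hij, .e j, tg j k hjk, .e k]
               [.e k, tg k j hjk.symm, .e j, tg j i hij.symm, .e i, tg i k hik, .e k]
  | r10 (i j k l : Fin n) (hij : i ≠ j) (hik : i ≠ k) (hil : i ≠ l)
        (hjk : j ≠ k) (hjl : j ≠ l) (hkl : k ≠ l) :
      RelETO n [.e k, tg k i hik.symm, .e i, tg i j hij, .e j, tg j l hjl, .e l,
                  tg l k hkl.symm, .e k]
               [.e k, tg k l hkl, .e l, tg l i hil.symm, .e i, tg i j hij, .e j,
                  tg j k hjk, .e k]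
  | r11 (i : Fin n) : RelETO n [.o i, .o i] [.o i]
  | r12 (i j : Fin n) (h : i ≠ j) : RelETO n [.o i, .o j] [.o j, .o i]
  | r13 (i j : Fin n) (h : i ≠ j) : RelETO n [.o i, .e j] [.e j, .o i]
  | r14 (i : Fin n) : RelETO n [.o i, .e i, .o i] [.o i]
  | r15 (i : Fin n) : RelETO n [.e i, .o i, .e i] [.e i]
  | r16 (i j k : Fin n) (hij : i ≠ j) : RelETO n [tg i j hij, .o k] [.o k, tg i j hij]
  | r17a (i j : Fin n) (h : i ≠ j) : RelETO n [tg i j h, .o i] [.o i, .o j]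
  | r17b (i j : Fin n) (h : i ≠ j) : RelETO n [tg i j h, .o j] [.o i, .o j]

/-- The map `Φ` on letters. -/
def phiLetter {n : ℕ} : ETO n → RP n
  | .e i => ebar i
  | .t i j _ => tbar i j
  | .o i => obar i

/-- The homomorphism `Φ : (E ∪ T ∪ O)⁺ → RP_n`. -/
def PhiETO {n : ℕ} : List (ETO n) → RP n := evalWord phiLetter

/-- For `A = {i₁ < ⋯ < i_k} ⊆ [n]`, the word `o_A = o_{i₁} ⋯ o_{i_k}`. -/
def oWord {n : ℕ} (A : Finset (Fin n)) : List (ETO n) :=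
  (A.sort (· ≤ ·)).map ETO.o

/-- The chain of `t`-letters along consecutive members of a list. -/
def tChain {n : ℕ} : List (Fin n) → List (ETO n)
  | a :: b :: rest => tgd a b ++ tChain (b :: rest)
  | _ => []

/-- For `A = {i₁ < ⋯ < i_k} ⊆ [n]`, the word `t_A = t_{i₁i₂} t_{i₂i₃} ⋯ t_{i_{k-1}i_k}`
(the empty word if `|A| ≤ 1`). -/
def tWord {n : ℕ} (A : Finset (Fin n)) : List (ETO n) :=
  tChain (A.sort (· ≤ ·))

/-- The word `e_ij = e_i t_ij e_j` for distinct `i, j`. -/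
def eWord {n : ℕ} (i j : Fin n) (h : i ≠ j) : List (ETO n) :=
  [ETO.e i, tg i j h, ETO.e j]

/-- `α` lies in (the copy inside `RP_n` of) the symmetric inverse monoid `I_n`:
no rook dots, and every block has at most one upper and at most one lower point. -/
def RP.MemIn {n : ℕ} (α : RP n) : Prop :=
  α.NoDots ∧ (∀ i j : Fin n, α.rel (Sum.inl i) (Sum.inl j) → i = j) ∧
    (∀ i j : Fin n, α.rel (Sum.inr i) (Sum.inr j) → i = j)



/-! ### The quotient monoid and relations between letters -/

/-- `CongGen (RelETO n)` as a bundled congruence on the free monoid. -/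
def etoCon (n : ℕ) : Con (FreeMonoid (ETO n)) where
  r u v := CongGen (RelETO n) u.toList v.toList
  iseqv := ⟨fun _ => .refl _, .symm, .trans⟩
  mul' h h' := .mul h h'

/-- The class of a word in the quotient monoid. -/
def q {n : ℕ} (w : List (ETO n)) : (etoCon n).Quotient :=
  ((FreeMonoid.ofList w : FreeMonoid (ETO n)) : (etoCon n).Quotient)

section
variable {n : ℕ}

lemma q_eq_iff {u v : List (ETO n)} : q u = q v ↔ CongGen (RelETO n) u v :=
  (etoCon n).eq

lemma q_append (u v : List (ETO n)) : q (u ++ v) = q u * q v := rfl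

lemma q_nil : q ([] : List (ETO n)) = 1 := rfl

lemma q_cons (x : ETO n) (v : List (ETO n)) : q (x :: v) = q [x] * q v := rfl

lemma q_rel {u v : List (ETO n)} (h : RelETO n u v) : q u = q v := q_eq_iff.2 (.rel h)

lemma tg_of_lt {i j : Fin n} (h : i < j) : tg i j h.ne = .t i j h := by
  simp [tg, h]

lemma tg_isET {i j : Fin n} (h : i ≠ j) : (tg i j h).isET := by
  unfold tg; split <;> trivial

lemma o_sq (i : Fin n) : q [ETO.o i] * q [.o i] = q [.o i] := q_rel (.r11 i)

lemma commute_oo (i j : Fin n) : Commute (q [ETO.o i]) (q [.o j]) := by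
  by_cases h : i = j
  · rw [h]
  · exact q_rel (.r12 i j h)

lemma commute_ee (i j : Fin n) : Commute (q [ETO.e i]) (q [.e j]) := by
  by_cases h : i = j
  · rw [h]
  · exact q_rel (.r2 i j h)

lemma commute_oe {i j : Fin n} (h : i ≠ j) : Commute (q [ETO.o i]) (q [.e j]) :=
  q_rel (.r13 i j h)

lemma commute_otg {i j : Fin n} (k : Fin n) (h : i ≠ j) :
    Commute (q [ETO.o k]) (q [tg i j h]) :=
  (q_rel (.r16 i j k h)).symm

lemma commute_ot {i j : Fin n} (k : Fin n) (h : i < j) :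
    Commute (q [ETO.o k]) (q [.t i j h]) := by
  rw [← tg_of_lt h]; exact commute_otg k h.ne

lemma commute_et {i j k : Fin n} (h : i < j) (hi : k ≠ i) (hj : k ≠ j) :
    Commute (q [ETO.e k]) (q [.t i j h]) := by
  rw [← tg_of_lt h]; exact (q_rel (.r6 i j k h.ne hi hj)).symm

lemma o_mul_tg_left {i j : Fin n} (h : i ≠ j) :
    q [ETO.o i] * q [tg i j h] = q [.o i] * q [.o j] :=
  (commute_otg i h).eq.trans (q_rel (.r17a i j h))

lemma o_mul_tg_right {i j : Fin n} (h : i ≠ j) :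
    q [ETO.o j] * q [tg i j h] = q [.o i] * q [.o j] :=
  (commute_otg j h).eq.trans (q_rel (.r17b i j h))

/-! ### Moving `o_i` and `e_i` past words -/

/-- The letter `o_i` commutes with every word over `E ∪ T` in which `e_i` does not occur. -/
lemma commute_o_word (i : Fin n) (v : List (ETO n)) (hv : ∀ x ∈ v, ETO.isET x)
    (hi : ETO.e i ∉ v) : Commute (q [ETO.o i]) (q v) := by
  induction v with
  | nil => exact Commute.one_right _
  | cons x v ih =>
    rw [q_cons x v]
    simp only [List.mem_cons, forall_eq_or_imp, not_or] at hv hi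
    refine Commute.mul_right ?_ (ih hv.2 hi.2)
    match x with
    | .e j => exact commute_oe fun h => hi.1 (by rw [h])
    | .t a b h => exact commute_ot i h
    | .o j => exact hv.1.elim

/-- In the presence of `o_i` on the left, each letter `t_ij` may be replaced by `o_j`; once all
are replaced, the word no longer involves the index `i` and so commutes with `e_i`. -/
lemma exists_commuting (i : Fin n) (v : List (ETO n)) (hv : ∀ x ∈ v, ETO.isET x)
    (hi : ETO.e i ∉ v) :
    ∃ v' : List (ETO n), v'.length ≤ v.length ∧ q [ETO.o i] * q v = q [.o i] * q v' ∧
      Commute (q [ETO.e i]) (q v') := by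
  induction v with
  | nil => exact ⟨[], le_rfl, rfl, Commute.one_right _⟩
  | cons x v ih =>
    simp only [List.mem_cons, forall_eq_or_imp, not_or] at hv hi
    obtain ⟨v', hl, hq, hc⟩ := ih hv.2 hi.2
    -- It suffices to exchange the first letter `x` for a suitable letter `y`.
    suffices ∃ y, q [ETO.o i] * q [x] = q [.o i] * q [y] ∧
        Commute (q [ETO.o i]) (q [x]) ∧ Commute (q [ETO.o i]) (q [y]) ∧
        Commute (q [ETO.e i]) (q [y]) by
      obtain ⟨y, hxy, hx, hy, hey⟩ := this
      refine ⟨y :: v', by simpa using hl, ?_, ?_⟩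
      · rw [q_cons x v, q_cons y v', ← mul_assoc, hxy, hy.eq, mul_assoc, hq, ← mul_assoc, ← hy.eq,
          mul_assoc]
      · rw [q_cons y v']; exact hey.mul_right hc
    match x with
    | .e j =>
      have hij : i ≠ j := fun h => hi.1 (by rw [h])
      exact ⟨.e j, rfl, commute_oe hij, commute_oe hij, commute_ee i j⟩
    | .t a b h =>
      by_cases ha : i = a
      · subst ha
        exact ⟨.o b, tg_of_lt h ▸ o_mul_tg_left h.ne, commute_ot _ h, commute_oo _ _,
          (commute_oe h.ne').symm⟩
      by_cases hb : i = b
      · subst hb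
        exact ⟨.o a, tg_of_lt h ▸ (o_mul_tg_right h.ne).trans (commute_oo _ _).eq,
          commute_ot _ h, commute_oo _ _, (commute_oe h.ne).symm⟩
      exact ⟨.t a b h, rfl, commute_ot _ h, commute_ot _ h, commute_et h ha hb⟩
    | .o j => exact hv.1.elim

/-! ### The factorization -/

/-- A word over `O` of length at most one. -/
def Short (w : List (ETO n)) : Prop := w = [] ∨ ∃ k, w = [.o k]

lemma Short.isO {w : List (ETO n)} (h : Short w) : ∀ x ∈ w, ETO.isO x := by
  rcases h with rfl | ⟨k, rfl⟩ <;> simp [ETO.isO]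

lemma Short.length_le {w : List (ETO n)} (h : Short w) : w.length ≤ 1 := by
  rcases h with rfl | ⟨k, rfl⟩ <;> simp

/-- A letter `o_i` following a short word is absorbed at the cost of at most one letter of `T`. -/
lemma Short.mul_o {w : List (ETO n)} (hw : Short w) (i : Fin n) :
    ∃ w' s : List (ETO n), Short w' ∧ (∀ x ∈ s, ETO.isET x) ∧
      w'.length + s.length ≤ w.length + 1 ∧ q w * q [.o i] = q w' * q s ∧
      Commute (q w') (q s) := by
  rcases hw with rfl | ⟨k, rfl⟩
  · exact ⟨[.o i], [], .inr ⟨i, rfl⟩, by simp, by simp, by simp [q_nil], by simp [q_nil]⟩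
  by_cases h : k = i
  · subst h
    exact ⟨[.o k], [], .inr ⟨k, rfl⟩, by simp, by simp, by simp [q_nil, o_sq], by simp [q_nil]⟩
  · exact ⟨[.o k], [tg k i h], .inr ⟨k, rfl⟩, by simpa using tg_isET h, by simp,
      (o_mul_tg_left h).symm, commute_otg k h⟩

/-- The factorization, with the length bound that makes the induction work. -/
lemma exists_form (m : ℕ) : ∀ w : List (ETO n), w.length = m →
    ∃ w1 w2 w3 : List (ETO n), Short w1 ∧ (∀ x ∈ w2, ETO.isET x) ∧ Short w3 ∧
      w1.length + w2.length + w3.length ≤ m ∧ q w = q w1 * q w2 * q w3 := by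
  induction m using Nat.strong_induction_on with
  | _ m IH =>
  intro w hm
  rcases List.eq_nil_or_concat w with rfl | ⟨w0, x, rfl⟩
  · exact ⟨[], [], [], .inl rfl, by simp, .inl rfl, by simp, by simp [q_nil]⟩
  rw [List.concat_eq_append] at hm ⊢
  simp only [List.length_append, List.length_singleton] at hm
  obtain ⟨w1, w2, w3, h1, h2, h3, hl, hq⟩ := IH w0.length (by omega) w0 rfl
  rw [q_append, hq]
  -- A letter of `E ∪ T` that commutes with `w3` joins `w2`.
  have joins : x.isET → Commute (q w3) (q [x]) →
      ∃ v1 v2 v3 : List (ETO n), Short v1 ∧ (∀ x ∈ v2, ETO.isET x) ∧ Short v3 ∧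
        v1.length + v2.length + v3.length ≤ m ∧
        q w1 * q w2 * q w3 * q [x] = q v1 * q v2 * q v3 := by
    intro hx hc
    refine ⟨w1, w2 ++ [x], w3, h1, ?_, h3, ?_, ?_⟩
    · intro y hy
      rcases List.mem_append.1 hy with hy | hy
      · exact h2 y hy
      · rw [List.mem_singleton.1 hy]; exact hx
    · simp only [List.length_append, List.length_singleton]; omega
    · rw [q_append, mul_assoc _ (q w3), hc.eq]; simp only [mul_assoc]
  match x with
  | .o k =>
    obtain ⟨w', s, hw', hs, hsl, hsq, hsc⟩ := h3.mul_o k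
    refine ⟨w1, w2 ++ s, w', h1, ?_, hw', ?_, ?_⟩
    · intro y hy
      exact (List.mem_append.1 hy).elim (h2 y) (hs y)
    · simp only [List.length_append]; omega
    · rw [q_append, mul_assoc _ (q w3), hsq, hsc.eq]; simp only [mul_assoc]
  | .t a b h =>
    refine joins trivial ?_
    rcases h3 with rfl | ⟨k, rfl⟩
    · exact Commute.one_left _
    · exact commute_ot k h
  | .e i =>
    rcases h3 with rfl | ⟨k, rfl⟩
    · exact joins trivial (Commute.one_left _)
    by_cases hki : k = i
    swap
    · exact joins trivial (commute_oe hki)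
    subst hki
    simp only [List.length_singleton] at hl
    by_cases hmem : ETO.e k ∈ w2
    · -- Splitting at the last occurrence of `e_k`, found as the first one in the reversal.
      obtain ⟨v, u, hsplit, hv⟩ :
          ∃ v u, w2 = u ++ .e k :: v ∧ ETO.e k ∉ v := by
        obtain ⟨a, b, hab, ha⟩ := List.eq_append_cons_of_mem (List.mem_reverse.2 hmem)
        refine ⟨a.reverse, b.reverse, ?_, by simpa using ha⟩
        rw [← List.reverse_reverse w2, hab]; simp
      subst hsplit
      have hvET : ∀ x ∈ v, ETO.isET x := fun x hx => h2 x (by simp [hx])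
      obtain ⟨v', hvl, hvq, hvc⟩ := exists_commuting k v hvET hv
      simp only [List.length_append, List.length_cons] at hl
      obtain ⟨y1, y2, y3, g1, g2, g3, gl, gq⟩ :=
        IH (w1 ++ (u ++ .e k :: v')).length
          (by simp only [List.length_append, List.length_cons]; omega) _ rfl
      refine ⟨y1, y2, y3, g1, g2, g3, gl.trans ?_, ?_⟩
      · simp only [List.length_append, List.length_cons]; omega
      have key : q [ETO.e k] * (q v * (q [.o k] * q [.e k])) = q [.e k] * q v' := by
        have heoe : q [ETO.e k] * q [.o k] * q [.e k] = q [.e k] := q_rel (.r15 k)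
        calc q [ETO.e k] * (q v * (q [.o k] * q [.e k]))
            = q [.e k] * ((q v * q [.o k]) * q [.e k]) := by simp only [mul_assoc]
          _ = q [.e k] * (q [.o k] * q v' * q [.e k]) := by
              rw [← (commute_o_word k v hvET hv).eq, hvq]
          _ = q [.e k] * (q [.o k] * (q [.e k] * q v')) := by
              rw [mul_assoc (q [.o k]), hvc.eq]
          _ = q [.e k] * q v' := by rw [← mul_assoc, ← mul_assoc, heoe]
      rw [← gq, q_append, q_append, q_append, q_cons (.e k) v, q_cons (.e k) v', ← key]
      simp only [mul_assoc]
    · obtain ⟨w', s, hw', hs, hsl, hsq, -⟩ := h1.mul_o k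
      refine ⟨w', s ++ (w2 ++ [.e k]), [], hw', ?_, .inl rfl, ?_, ?_⟩
      · intro y hy
        simp only [List.mem_append, List.mem_singleton] at hy
        rcases hy with hy | hy | rfl
        · exact hs y hy
        · exact h2 y hy
        · trivial
      · simp only [List.length_append, List.length_singleton, List.length_nil]; omega
      · rw [q_append, q_append, q_nil, mul_one, ← mul_assoc, ← hsq, mul_assoc (q w1),
          ← (commute_o_word k w2 h2 hmem).eq]
        simp only [mul_assoc]

end

/-- every `w ∈ (E ∪ T ∪ O)⁺` satisfies `w ~ w₁ w₂ w₃` for some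
`w₁, w₃ ∈ O*` of length at most 1 and some `w₂ ∈ (E ∪ T)*`. -/
theorem stmt6 (n : ℕ) (hn : 1 ≤ n) (w : List (ETO n)) (hw : w ≠ []) :
    ∃ w1 w2 w3 : List (ETO n),
      (∀ x ∈ w1, ETO.isO x) ∧ (∀ x ∈ w2, ETO.isET x) ∧ (∀ x ∈ w3, ETO.isO x) ∧
      w1.length ≤ 1 ∧ w3.length ≤ 1 ∧
      CongGen (RelETO n) w (w1 ++ w2 ++ w3) := by
  obtain ⟨w1, w2, w3, h1, h2, h3, -, hq⟩ := exists_form w.length w rfl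
  refine ⟨w1, w2, w3, h1.isO, h2, h3.isO, h1.length_le, h3.length_le, ?_⟩
  rwa [← q_eq_iff, q_append, q_append]

end RookPaper
end

section
/- Let i,j ∈ [n] with i ≠ j, and let k ∈ [n] with k ≠ i. Then o_k e_ij ~ e_ij o_k if k ≠ j, and o_j e_ij ~ e_ij o_i. -/
/-!
Since `o_k` commutes with every `t`-letter and with `e_i` for `i ≠ k`, it can be moved through
`e_i t_ij e_j` letter by letter when `k ∉ {i, j}`. For the second claim, both sides reduce to
`e_i o_i o_j e_j`: on the left, `o_j` moves past `e_i` and is absorbed through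
`t_ij o_j ~ o_i o_j`; on the right, `o_i` moves past `e_j` and is absorbed through
`t_ij o_i ~ o_i o_j`.
-/

namespace RookPaper

/-- A defining relation may be applied inside a word, between any prefix and suffix. -/
theorem CongGen.step {X : Type*} {R : List X → List X → Prop} (a : List X) {u v : List X}
    (b : List X) (h : R u v) : CongGen R (a ++ (u ++ b)) (a ++ (v ++ b)) :=
  .mul (.refl a) (.mul (.rel h) (.refl b))

/-- for distinct `i, j ∈ [n]` and `k ≠ i`:  `o_k e_ij ~ e_ij o_k` if
`k ≠ j`, and `o_j e_ij ~ e_ij o_i` (where `e_ij = e_i t_ij e_j`). -/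
theorem stmt7 (n : ℕ) (hn : 1 ≤ n) (i j k : Fin n) (hij : i ≠ j) (hki : k ≠ i) :
    (k ≠ j →
      CongGen (RelETO n) (ETO.o k :: eWord i j hij) (eWord i j hij ++ [ETO.o k])) ∧
    CongGen (RelETO n) (ETO.o j :: eWord i j hij) (eWord i j hij ++ [ETO.o i]) := by
  -- An `o`-letter can be moved past `e_i t_ij` from the left, as long as it is not `o_i`.
  have left (m : Fin n) (hm : m ≠ i) : CongGen (RelETO n)
      [ETO.o m, ETO.e i, tg i j hij, ETO.e j] [ETO.e i, tg i j hij, ETO.o m, ETO.e j] :=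
    CongGen.trans (CongGen.step [] [tg i j hij, ETO.e j] (RelETO.r13 m i hm))
      (CongGen.symm (CongGen.step [ETO.e i] [ETO.e j] (RelETO.r16 i j m hij)))
  have right (m : Fin n) (hm : m ≠ j) : CongGen (RelETO n)
      [ETO.e i, tg i j hij, ETO.o m, ETO.e j] [ETO.e i, tg i j hij, ETO.e j, ETO.o m] :=
    CongGen.step [ETO.e i, tg i j hij] [] (RelETO.r13 m j hm)
  refine ⟨fun hkj => CongGen.trans (left k hki) (right k hkj), ?_⟩
  have mid : CongGen (RelETO n)
      [ETO.e i, tg i j hij, ETO.o j, ETO.e j] [ETO.e i, tg i j hij, ETO.o i, ETO.e j] :=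
    CongGen.trans (CongGen.step [ETO.e i] [ETO.e j] (RelETO.r17b i j hij))
      (CongGen.symm (CongGen.step [ETO.e i] [ETO.e j] (RelETO.r17a i j hij)))
  exact CongGen.trans (left j hij.symm) (CongGen.trans mid (right i hij))

end RookPaper
end

section
/- Let w ∈ (E∪T)^+ be a word whose image w̄ = wΦ lies in I_n, and let i ∈ dom(w̄). Then o_i w ~ w o_{i w̄}. -/
/-!
Insert a letter `o` into a word `w` over `E ∪ T`, on the left of `w` at an upper point or on the
right of `w` at a lower point. The class of the resulting word modulo `~` depends only on the block
of `w̄` containing the point (`cong_insertO`), and the theorem compares the points `i` and `j'` of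
one block.

For a single letter this follows from the commutations `RelETO.r13` and `RelETO.r16` and the
absorption laws `RelETO.r17a` and `RelETO.r17b`. For `w = c u` there is one word for each vertex of
the product graph `Γ(c̄, ū)`, a middle vertex inserting `o` between `c` and `u`. The endpoints of an
edge give congruent words, by the one-letter case or by induction on `u`, and hence so do any two
vertices joined by a path.
-/

namespace RookPaper

/-- Insertion of a letter `o` at a point: `o_k w` at the upper point `k`, and `w o_k` at the lower
point `k'` of the same index. -/
def insertO {n : ℕ} (w : List (ETO n)) : Pt n → List (ETO n) :=
  Sum.elim (fun k => ETO.o k :: w) (fun k => w ++ [ETO.o k])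

/-- If `o_k` and `o_l` commute with `c` and `c o_k ~ c o_l`, then the insertions into `c` at any
points of index `k` and `l`, upper or lower, are congruent. -/
lemma cong_insertO_of_idx {n : ℕ} {c : ETO n} {x y : Pt n}
    (hx : CongGen (RelETO n) [.o (idx x), c] [c, .o (idx x)])
    (hy : CongGen (RelETO n) [.o (idx y), c] [c, .o (idx y)])
    (hxy : CongGen (RelETO n) [c, .o (idx x)] [c, .o (idx y)]) :
    CongGen (RelETO n) (insertO [c] x) (insertO [c] y) := by
  rcases x with k | k <;> rcases y with l | l
  · exact hx.trans (hxy.trans hy.symm)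
  · exact hx.trans hxy
  · exact hxy.trans hy.symm
  · exact hxy

lemma cong_insertO_letter {n : ℕ} {c : ETO n} (hc : c.isET) {x y : Pt n}
    (h : (phiLetter c).rel x y) :
    CongGen (RelETO n) (insertO [c] x) (insertO [c] y) := by
  cases c with
  | o k => exact hc.elim
  | e k =>
    rcases h with rfl | ⟨h, hk⟩
    · exact .refl _
    · have hx := CongGen.rel (RelETO.r13 (idx x) k hk)
      exact cong_insertO_of_idx hx (h ▸ hx) (h ▸ .refl _)
  | t a b hab =>
    have htg : tg a b hab.ne = ETO.t a b hab := by simp [tg, hab]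
    have hcomm (k : Fin n) :
        CongGen (RelETO n) [.o k, .t a b hab] [.t a b hab, .o k] :=
      htg ▸ (CongGen.rel (RelETO.r16 a b k hab.ne)).symm
    have h17 {k : Fin n} (hk : k = a ∨ k = b) :
        CongGen (RelETO n) [.t a b hab, .o k] [.o a, .o b] := by
      rcases hk with rfl | rfl
      · exact htg ▸ CongGen.rel (RelETO.r17a k b hab.ne)
      · exact htg ▸ CongGen.rel (RelETO.r17b a k hab.ne)
    refine cong_insertO_of_idx (hcomm _) (hcomm _) ?_
    rcases h with h | ⟨hx, hy⟩
    · exact h ▸ .refl _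
    · exact (h17 hx).trans (h17 hy).symm

/-- Insertions of `o` at two points of the same block of `w̄` are congruent. The congruence holds for
an arbitrary image in the partition monoid, which is what makes the induction on `w` work. -/
theorem cong_insertO {n : ℕ} (w : List (ETO n)) (hw : w ≠ []) (hET : ∀ c ∈ w, ETO.isET c)
    {x y : Pt n} (h : (PhiETO w).rel x y) :
    CongGen (RelETO n) (insertO w x) (insertO w y) := by
  induction w generalizing x y with
  | nil => exact absurd rfl hw
  | cons c u ih =>
    rcases u with _ | ⟨d, u⟩
    · exact cong_insertO_letter (hET c (by simp)) h
    · have ih' {p q : Pt n} (hpq : (PhiETO (d :: u)).rel p q) :=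
        ih (by simp) (fun a ha => hET a (List.mem_cons_of_mem _ ha)) hpq
      -- the word attached to each vertex of the product graph
      let g : V3 n → List (ETO n) :=
        Sum.elim (fun k => .o k :: c :: d :: u) (fun p => c :: insertO (d :: u) p)
      have hgA (p : Pt n) : g (embA p) = insertO [c] p ++ (d :: u) := by
        rcases p with k | k <;> rfl
      have hgB (p : Pt n) : g (embB p) = [c] ++ insertO (d :: u) p := by
        rcases p with k | k <;> rfl
      have hgOut (p : Pt n) : g (embOut p) = insertO (c :: d :: u) p := by
        rcases p with k | k <;> rfl
      have hconn {v v' : V3 n} (hv : pgConn (phiLetter c) (PhiETO (d :: u)) v v') :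
          CongGen (RelETO n) (g v) (g v') := by
        induction hv with
        | base he =>
          rcases he with ⟨p, q, hpq, rfl, rfl⟩ | ⟨p, q, hpq, rfl, rfl⟩
          · rw [hgA, hgA]
            exact (cong_insertO_letter (hET c (by simp)) hpq).mul (.refl _)
          · rw [hgB, hgB]
            exact (CongGen.refl _).mul (ih' hpq)
        | refl v => exact .refl _
        | symm _ h => exact h.symm
        | trans _ _ h h' => exact h.trans h'
      rw [← hgOut, ← hgOut]
      exact hconn h.1

/-- if `w ∈ (E ∪ T)⁺` has image `w̄ = wΦ` in `I_n`, and `i ∈ dom(w̄)`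
(with `{i, j'}` the block of `w̄` containing `i`, i.e. `j = i w̄`), then
`o_i w ~ w o_{i w̄}`. -/
theorem stmt8 (n : ℕ) (hn : 1 ≤ n) (w : List (ETO n)) (hw : w ≠ [])
    (hET : ∀ x ∈ w, ETO.isET x) (hI : (PhiETO w).MemIn)
    (i j : Fin n) (hdom : (PhiETO w).rel (Sum.inl i) (Sum.inr j)) :
    CongGen (RelETO n) (ETO.o i :: w) (w ++ [ETO.o j]) :=
  cong_insertO w hw hET hdom

end RookPaper
end
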